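/- arXiv:1602.05738 — 2 statements merged into one kernel-verified Lean document; each statement's English description precedes it below -/
import Mathlib

section
/- Let (X, μ) be a probability space with a measure-preserving ℤ²-action, let f ∈ L^∞(X) be an integer-valued function, and let p ∈ Ann(f). If n_p denotes the product of all primes less than ‖p‖·‖f‖_∞ + 1, then p^{(r)} ∈ Ann(f) whenever r ≡ 1 (mod n_p) with r ≥ 1. -/
/-!
For a prime `q`, the Frobenius congruence `p^{(q)} ≡ p ^ q (mod q)` in `ℤ[G]` shows that every value
of `p^{(q)} · f` is divisible by `q` as soon as `p · f = 0`. These values are bounded by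
`‖p‖ ‖f‖_∞`, so they vanish if `q` is larger than that. As `p^{(ab)} = (p^{(b)})^{(a)}` and the
bound for `p^{(r)} · f` does not depend on `r`, this can be iterated over the prime factors of `r`,
all of which are large when `r ≡ 1 (mod n_p)`. The argument is deterministic: for almost every `x`
it applies to the function `g ↦ f (g +ᵥ x)` on `G`, which is everywhere bounded and
integer-valued.
-/

open MeasureTheory

/-- The action of a Laurent polynomial `p = Σ c_g u^g ∈ ℤ[u₁^±, u₂^±]` on a function
`f : X → ℝ`, relative to a `ℤ²`-action `T` on `X` : `(p · f)(x) = Σ c_g f(g⁻¹ · x)`. -/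
noncomputable def polyAct {X : Type*} (T : ℤ × ℤ → X → X)
    (p : AddMonoidAlgebra ℤ (ℤ × ℤ)) (f : X → ℝ) : X → ℝ :=
  fun x => Finsupp.sum p.coeff fun g c => (c : ℝ) * f (T (-g) x)

section Dilation

open scoped AddMonoidAlgebra

variable {G : Type*} [AddCommMonoid G]

/-- The dilation `p ↦ p^{(r)}`, sending `Σ c_g u^g` to `Σ c_g u^{rg}`, as an endomorphism of the
ring `ℤ[G]`. -/
noncomputable def dilate (r : ℕ) : ℤ[G] →+* ℤ[G] :=
  AddMonoidAlgebra.mapDomainRingHom ℤ (nsmulAddMonoidHom r : G →+ G)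

theorem dilate_single (r : ℕ) (g : G) (c : ℤ) :
    dilate r (AddMonoidAlgebra.single g c) = AddMonoidAlgebra.single (r • g) c :=
  AddMonoidAlgebra.mapDomain_single

theorem dilate_one (p : ℤ[G]) : dilate 1 p = p := by
  induction p using AddMonoidAlgebra.induction_linear with
  | zero => exact map_zero _
  | add p₁ p₂ h₁ h₂ => rw [map_add, h₁, h₂]
  | single g c => rw [dilate_single, one_nsmul]

theorem dilate_mul (m n : ℕ) (p : ℤ[G]) : dilate (m * n) p = dilate m (dilate n p) := by
  induction p using AddMonoidAlgebra.induction_linear with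
  | zero => simp only [map_zero]
  | add p₁ p₂ h₁ h₂ => simp only [map_add, h₁, h₂]
  | single g c => simp only [dilate_single, mul_nsmul']

theorem prime_dvd_dilate_sub_pow {q : ℕ} (hq : q.Prime) (p : ℤ[G]) :
    (q : ℤ[G]) ∣ dilate q p - p ^ q := by
  induction p using AddMonoidAlgebra.induction_linear with
  | zero => simp [hq.ne_zero]
  | add a b ha hb =>
    obtain ⟨w, hw⟩ := exists_add_pow_prime_eq hq a b
    have hsplit : dilate q (a + b) - (a + b) ^ q =
        (dilate q a - a ^ q) + (dilate q b - b ^ q) - q * (a * b * w) := by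
      rw [map_add, hw]
      ring
    rw [hsplit]
    exact dvd_sub (dvd_add ha hb) (dvd_mul_right _ _)
  | single g c =>
    obtain ⟨k, hk⟩ := (dvd_sub_comm).mp (Int.prime_dvd_pow_self_sub hq c)
    refine ⟨AddMonoidAlgebra.single (q • g) k, ?_⟩
    rw [dilate_single, AddMonoidAlgebra.single_pow, ← AddMonoidAlgebra.single_sub, hk,
      ← nsmul_eq_mul, ← nsmul_eq_mul, AddMonoidAlgebra.smul_single]

end Dilation

section Koopman

open scoped AddMonoidAlgebra

section AddGroup

variable {G X A : Type*} [AddGroup G] [AddAction G X] [AddCommGroup A]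

variable (X A) in
/-- The Koopman representation of `ℤ[G]` on the functions `X → A` on a `G`-set `X`, given by
`(p · f)(x) = Σ c_g f(-g +ᵥ x)` for `p = Σ c_g u^g`. -/
noncomputable def koopman : ℤ[G] →ₐ[ℤ] Module.End ℤ (X → A) :=
  AddMonoidAlgebra.lift ℤ (Module.End ℤ (X → A)) G
    { toFun g := LinearMap.funLeft ℤ A (-g.toAdd +ᵥ ·)
      map_one' := by
        ext f x
        simp
      map_mul' g h := by
        ext f x
        simp [LinearMap.funLeft_apply, add_vadd] }

theorem koopman_apply (p : ℤ[G]) (f : X → A) (x : X) :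
    koopman X A p f x = p.coeff.sum fun g c => c • f (-g +ᵥ x) := by
  simp [koopman, AddMonoidAlgebra.lift_apply, Finsupp.sum, LinearMap.funLeft_apply]

theorem koopman_map {B : Type*} [AddCommGroup B] (φ : A →+ B) (p : ℤ[G]) (f : X → A) :
    koopman X B p (φ ∘ f) = φ ∘ koopman X A p f := by
  ext x
  simp only [koopman_apply, Function.comp_apply, Finsupp.sum, map_sum, map_zsmul]

theorem koopman_comp_orbit (p : ℤ[G]) (f : X → A) (x : X) :
    koopman G A p (fun g => f (g +ᵥ x)) = fun g => koopman X A p f (g +ᵥ x) := by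
  ext g
  simp only [koopman_apply, vadd_eq_add, add_vadd]

end AddGroup

/-- The norm `‖p‖ = Σ |c_g|` of `p = Σ c_g u^g`. -/
noncomputable def l1Norm {G : Type*} (p : ℤ[G]) : ℝ :=
  p.coeff.sum fun _ c => ((|c| : ℤ) : ℝ)

section AddCommGroup

variable {G X A : Type*} [AddCommGroup G] [AddAction G X]

theorem koopman_dilate_apply [AddCommGroup A] (r : ℕ) (p : ℤ[G]) (f : X → A) (x : X) :
    koopman X A (dilate r p) f x = p.coeff.sum fun g c => c • f (-(r • g) +ᵥ x) := by
  rw [koopman_apply]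
  exact Finsupp.sum_mapDomain_index (fun _ => zero_smul ℤ _) fun _ _ _ => add_smul _ _ _

theorem norm_koopman_dilate_le [SeminormedAddCommGroup A] {f : X → A} {C : ℝ}
    (hf : ∀ x, ‖f x‖ ≤ C) (r : ℕ) (p : ℤ[G]) (x : X) :
    ‖koopman X A (dilate r p) f x‖ ≤ l1Norm p * C := by
  rw [koopman_dilate_apply, l1Norm, Finsupp.sum, Finsupp.sum, Finset.sum_mul]
  refine norm_sum_le_of_le _ fun g _ => (norm_zsmul_le _ _).trans ?_
  rw [Int.norm_eq_abs, ← Int.cast_abs]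
  gcongr
  exact hf _

theorem prime_dvd_koopman_dilate {q : ℕ} (hq : q.Prime) {p : ℤ[G]} {f : X → ℤ}
    (hp : koopman X ℤ p f = 0) (x : X) : (q : ℤ) ∣ koopman X ℤ (dilate q p) f x := by
  obtain ⟨s, hs⟩ := prime_dvd_dilate_sub_pow hq p
  have hpow : koopman X ℤ (p ^ q) f = 0 := by
    rw [← pow_sub_one_mul hq.ne_zero, map_mul, Module.End.mul_apply, hp, map_zero]
  refine ⟨koopman X ℤ s f x, ?_⟩
  rw [sub_eq_iff_eq_add.mp hs, map_add, LinearMap.add_apply, hpow, add_zero, ← nsmul_eq_mul,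
    map_nsmul, LinearMap.smul_apply, Pi.smul_apply, nsmul_eq_mul]

theorem koopman_dilate_eq_zero {f : X → ℤ} {C : ℝ} (hf : ∀ x, ‖f x‖ ≤ C) {p : ℤ[G]}
    (hp : koopman X ℤ p f = 0) {r : ℕ} (hr : r ≠ 0)
    (hprime : ∀ q : ℕ, q.Prime → q ∣ r → l1Norm p * C < q) :
    koopman X ℤ (dilate r p) f = 0 := by
  induction r using induction_on_primes with
  | zero => exact absurd rfl hr
  | one => rwa [dilate_one]
  | prime_mul q a hq ih =>
    have ha : koopman X ℤ (dilate a p) f = 0 :=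
      ih (right_ne_zero_of_mul hr) fun q' hq' hdvd => hprime q' hq' (hdvd.mul_left q)
    ext x
    have hdvd : (q : ℤ) ∣ koopman X ℤ (dilate (q * a) p) f x := by
      rw [dilate_mul]
      exact prime_dvd_koopman_dilate hq ha x
    have hlt : ‖koopman X ℤ (dilate (q * a) p) f x‖ < q :=
      (norm_koopman_dilate_le hf _ p x).trans_lt (hprime q hq (dvd_mul_right q a))
    rw [Int.norm_eq_abs] at hlt
    exact Int.eq_zero_of_abs_lt_dvd hdvd (mod_cast hlt)

theorem dilated_poly_mem_annihilator_general [Countable G] [MeasurableSpace X] {μ : Measure X}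
    (hμ : ∀ g : G, Measure.QuasiMeasurePreserving (g +ᵥ · : X → X) μ μ) {f : X → ℝ}
    (hfint : ∀ᵐ x ∂μ, ∃ k : ℤ, f x = k) {C : ℝ} (hfC : ∀ᵐ x ∂μ, ‖f x‖ ≤ C) {p : ℤ[G]}
    (hp : koopman X ℝ p f =ᵐ[μ] 0) {r : ℕ} (hr : r ≠ 0)
    (hprime : ∀ q : ℕ, q.Prime → q ∣ r → l1Norm p * C < q) :
    koopman X ℝ (dilate r p) f =ᵐ[μ] 0 := by
  filter_upwards [ae_all_iff.mpr fun g => (hμ g).ae hfint, ae_all_iff.mpr fun g => (hμ g).ae hfC,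
    ae_all_iff.mpr fun g => (hμ g).ae hp] with x hint hC hzero
  choose k hk using hint
  have hcast (s : ℤ[G]) (g : G) : koopman X ℝ s f (g +ᵥ x) = koopman G ℤ s k g := by
    have horbit : (fun g : G => f (g +ᵥ x)) = Int.castAddHom ℝ ∘ k := funext hk
    rw [← congrFun (koopman_comp_orbit s f x) g, horbit, koopman_map, Function.comp_apply,
      Int.coe_castAddHom]
  have hkC (g : G) : ‖k g‖ ≤ C := by
    rw [← Int.norm_cast_real, ← hk]
    exact hC g
  have hkp : koopman G ℤ p k = 0 := by
    ext g
    have hkpg : (koopman G ℤ p k g : ℝ) = 0 := (hcast p g).symm.trans (hzero g)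
    exact_mod_cast hkpg
  rw [← zero_vadd G x, hcast, koopman_dilate_eq_zero hkC hkp hr hprime, Pi.zero_apply,
    Int.cast_zero, Pi.zero_apply]

end AddCommGroup

end Koopman

theorem ae_norm_le_toReal_eLpNorm_top {X E : Type*} [MeasurableSpace X] {μ : Measure X}
    [NormedAddCommGroup E] {f : X → E} (hf : MemLp f ⊤ μ) :
    ∀ᵐ x ∂μ, ‖f x‖ ≤ (eLpNorm f ⊤ μ).toReal := by
  rw [toReal_eLpNorm hf.aestronglyMeasurable]
  exact ae_le_lpNorm_exponent_top hf

theorem polyAct_eq_koopman {X : Type*} [AddAction (ℤ × ℤ) X] (p : AddMonoidAlgebra ℤ (ℤ × ℤ))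
    (f : X → ℝ) : polyAct (· +ᵥ ·) p f = koopman X ℝ p f := by
  ext x
  simp only [polyAct, koopman_apply, zsmul_eq_mul]

theorem not_dvd_of_modEq_one_prod {s : Finset ℕ} {q r : ℕ} (hqs : q ∈ s) (hq : q ≠ 1)
    (hr : r ≡ 1 [MOD ∏ i ∈ s, i]) : ¬ q ∣ r := fun hqr =>
  hq (Nat.dvd_one.mp (((hr.of_dvd (Finset.dvd_prod_of_mem _ hqs)).dvd_iff dvd_rfl).mp hqr))

theorem le_of_prime_dvd_of_modEq_one {B : ℝ}
    [DecidablePred fun q : ℕ => q.Prime ∧ (q : ℝ) < B] {q r : ℕ} (hq : q.Prime) (hqr : q ∣ r)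
    (hr : r ≡ 1 [MOD ∏ i ∈ (Finset.range (⌈B⌉₊ + 1)).filter
      (fun i : ℕ => i.Prime ∧ (i : ℝ) < B), i]) :
    B ≤ q := by
  by_contra! hlt
  have hmem : q ∈ (Finset.range (⌈B⌉₊ + 1)).filter fun i : ℕ => i.Prime ∧ (i : ℝ) < B := by
    rw [Finset.mem_filter, Finset.mem_range]
    exact ⟨(Nat.lt_ceil.mpr hlt).trans (Nat.lt_succ_self _), hq, hlt⟩
  exact not_dvd_of_modEq_one_prod hmem hq.ne_one hr hqr

open scoped Classical in
/-- **Proposition 3.1.** Let `f ∈ L^∞(X)` be integer-valued and `p ∈ Ann(f)`. If `n_p`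
is the product of all primes less than `‖p‖·‖f‖_∞ + 1`, then `p^{(r)} ∈ Ann(f)`
whenever `r ≥ 1` and `r ≡ 1 (mod n_p)`. Here `‖p‖ = Σ |c_g|` and
`p^{(r)} = Σ c_g u^{r·g}`. -/
theorem dilated_poly_mem_annihilator
    {X : Type*} [MeasurableSpace X] (μ : Measure X) [IsProbabilityMeasure μ]
    (T : ℤ × ℤ → X → X)
    (hmp : ∀ g, MeasurePreserving (T g) μ μ)
    (hT0 : T 0 = id)
    (hTadd : ∀ g h : ℤ × ℤ, T (g + h) = T g ∘ T h)
    (f : X → ℝ) (hfmeas : Measurable f)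
    (hfbdd : MemLp f ⊤ μ)
    (hfint : ∀ᵐ x ∂μ, ∃ k : ℤ, f x = (k : ℝ))
    (p : AddMonoidAlgebra ℤ (ℤ × ℤ))
    (hp : polyAct T p f =ᵐ[μ] (fun _ => (0 : ℝ)))
    (B : ℝ)
    (hB : B = (Finsupp.sum p.coeff fun _ c => ((|c| : ℤ) : ℝ)) * (eLpNorm f ⊤ μ).toReal + 1)
    (np : ℕ)
    (hnp : np = ∏ q ∈ (Finset.range (⌈B⌉₊ + 1)).filter
        (fun q => Nat.Prime q ∧ (q : ℝ) < B), q)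
    (r : ℕ) (hr : 1 ≤ r) (hmod : r ≡ 1 [MOD np]) :
    polyAct T (AddMonoidAlgebra.mapDomain (fun h : ℤ × ℤ => r • h) p) f
      =ᵐ[μ] (fun _ => (0 : ℝ)) := by
  let : AddAction (ℤ × ℤ) X :=
    { vadd := T
      zero_vadd := congrFun hT0
      add_vadd := fun g h => congrFun (hTadd g h) }
  have hpoly (s : AddMonoidAlgebra ℤ (ℤ × ℤ)) : polyAct T s f = koopman X ℝ s f :=
    polyAct_eq_koopman s f
  have hprime (q : ℕ) (hq : q.Prime) (hqr : q ∣ r) : l1Norm p * (eLpNorm f ⊤ μ).toReal < q :=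
    calc l1Norm p * (eLpNorm f ⊤ μ).toReal < B := hB ▸ lt_add_one _
      _ ≤ q := le_of_prime_dvd_of_modEq_one hq hqr (hnp ▸ hmod)
  rw [hpoly] at hp ⊢
  exact dilated_poly_mem_annihilator_general (fun g => (hmp g).quasiMeasurePreserving) hfint
    (ae_norm_le_toReal_eLpNorm_top hfbdd) hp (Nat.one_le_iff_ne_zero.mp hr) hprime
end

section
/- Let (X, μ) be a probability space equipped with an ergodic measure-preserving action of ℤ². If E ⊆ X is periodic and B ⊆ E is weakly periodic, then E ∖ B is weakly periodic. -/
open MeasureTheory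

/-- A measurable set `E` is 1-periodic if `gE = E` up to `μ`-null sets for some
nonzero `g ∈ ℤ²`. -/
def IsOnePeriodic {X : Type*} [MeasurableSpace X] (μ : Measure X)
    (T : ℤ × ℤ → X → X) (E : Set X) : Prop :=
  ∃ g : ℤ × ℤ, g ≠ 0 ∧ T g '' E =ᵐ[μ] E

/-- A measurable set `E` is periodic if `gE = E` (up to `μ`-null sets) for every `g`
in some finite index subgroup `Λ ⊆ ℤ²` (equivalently, `{g : gE = E}` is a finite
index subgroup of `ℤ²`). -/
def IsPeriodic {X : Type*} [MeasurableSpace X] (μ : Measure X)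
    (T : ℤ × ℤ → X → X) (E : Set X) : Prop :=
  ∃ Λ : AddSubgroup (ℤ × ℤ), Λ.FiniteIndex ∧ ∀ g ∈ Λ, T g '' E =ᵐ[μ] E

/-- A set is weakly periodic if it is a finite disjoint union of measurable
1-periodic sets. -/
def IsWeaklyPeriodic {X : Type*} [MeasurableSpace X] (μ : Measure X)
    (T : ℤ × ℤ → X → X) (E : Set X) : Prop :=
  ∃ (n : ℕ) (B : Fin n → Set X),
    (∀ i, MeasurableSet (B i)) ∧
    (∀ i j, i ≠ j → Disjoint (B i) (B j)) ∧
    (⋃ i, B i) = E ∧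
    ∀ i, IsOnePeriodic μ T (B i)

/-!
Write `B` as the disjoint union of the 1-periodic sets `b i`, with (almost everywhere) stabilizers
`H i`. For any two indices `i` and `j`, either every period of `b i` has a nonzero multiple in
`H j`, or `H i ⊔ H j` has finite index. Hence there are a finite index subgroup `L` of periods of
`E` and, for each `i`, a nonzero period `g ∈ L` of `b i` such that, for each `j`, `g` is a period
of `b j` or `L ≤ H i ⊔ H j`. In the latter case the `L`-translates of `b i` are almost disjoint from
those of `b j`: up to null sets, any pair of them is the image of `(b i, b j)` under one element.

Now partition `X` according to the set `J` of those `i` for which the `L`-saturation of `b i`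
contains the given point. The cells are `L`-invariant. On a cell with `i ∈ J`, the `b j` that do not
have the period `g` are negligible, so the trace of `E \ B` has the period `g`. On the cell with
`J = ∅`, the trace of `E \ B` is that of `E`, and every element of `L` is a period.
-/

open AddAction Function Set
open scoped Pointwise

section Periods

lemma exists_zsmul_mem_forall {G ι : Type*} [AddGroup G] [Finite ι] {K : ι → AddSubgroup G} {g : G}
    (h : ∀ i, ∃ m : ℤ, m ≠ 0 ∧ m • g ∈ K i) : ∃ m : ℤ, m ≠ 0 ∧ ∀ i, m • g ∈ K i := by
  choose m hm₀ hmK using h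
  cases nonempty_fintype ι
  refine ⟨∏ i, m i, Finset.prod_ne_zero_iff.2 fun i _ ↦ hm₀ i, fun i ↦ ?_⟩
  obtain ⟨k, hk⟩ := Finset.dvd_prod_of_mem m (Finset.mem_univ i)
  rw [hk, mul_comm, mul_zsmul]
  exact zsmul_mem (hmK i) k

lemma finiteIndex_of_forall_zsmul_mem {G : Type*} [AddCommGroup G] [AddGroup.FG G]
    {H : AddSubgroup G} {m : ℤ} (hm : m ≠ 0) (h : ∀ v : G, m • v ∈ H) : H.FiniteIndex := by
  have := AddSubgroup.finiteIndex_range_nsmulAddMonoidHom_of_fg G (Int.natAbs_ne_zero.2 hm)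
  refine AddSubgroup.finiteIndex_of_le (H := (nsmulAddMonoidHom m.natAbs).range) ?_
  rintro _ ⟨v, rfl⟩
  rw [nsmulAddMonoidHom_apply, ← natCast_zsmul, ← Int.sign_mul_self_eq_natAbs, mul_zsmul]
  exact zsmul_mem (h v) _

lemma exists_mem_ne_zero_of_finiteIndex {G : Type*} [AddCommGroup G] [Nontrivial G]
    [IsAddTorsionFree G] (L : AddSubgroup G) [L.FiniteIndex] : ∃ g ∈ L, g ≠ 0 := by
  obtain ⟨g, hg⟩ := exists_ne (0 : G)
  exact ⟨L.index • g, L.nsmul_index_mem g, smul_ne_zero AddSubgroup.FiniteIndex.index_ne_zero hg⟩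

lemma exists_zsmul_mem_or_finiteIndex_sup {H K : AddSubgroup (ℤ × ℤ)} {g k : ℤ × ℤ}
    (hg : g ∈ H) (hk : k ∈ K) (hk₀ : k ≠ 0) :
    (∃ m : ℤ, m ≠ 0 ∧ m • g ∈ K) ∨ (H ⊔ K).FiniteIndex := by
  obtain ⟨a, b⟩ := g
  obtain ⟨c, d⟩ := k
  by_cases hdet : a * d - b * c = 0
  · have hnorm : c * c + d * d ≠ 0 := by
      simpa only [ne_eq, mul_self_add_mul_self_eq_zero, Prod.mk_eq_zero] using hk₀
    have parallel : (c * c + d * d) • ((a, b) : ℤ × ℤ) = (a * c + b * d) • (c, d) := by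
      ext
      · simp only [Prod.smul_mk, smul_eq_mul]; linear_combination d * hdet
      · simp only [Prod.smul_mk, smul_eq_mul]; linear_combination (-c) * hdet
    exact .inl ⟨_, hnorm, parallel ▸ zsmul_mem hk _⟩
  · refine .inr (finiteIndex_of_forall_zsmul_mem hdet fun ⟨x, y⟩ ↦ ?_)
    have cramer : (a * d - b * c) • ((x, y) : ℤ × ℤ)
        = (x * d - y * c) • (a, b) + (a * y - b * x) • (c, d) := by
      ext <;> simp only [Prod.smul_mk, Prod.mk_add_mk, smul_eq_mul] <;> ring
    rw [cramer]
    exact AddSubgroup.add_mem_sup (zsmul_mem hg _) (zsmul_mem hk _)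

lemma exists_finiteIndex_le_and_forall_exists_mem {ι : Type*} [Finite ι] (Λ : AddSubgroup (ℤ × ℤ))
    [Λ.FiniteIndex] {H : ι → AddSubgroup (ℤ × ℤ)} (hH : ∀ i, ∃ h, h ≠ 0 ∧ h ∈ H i) :
    ∃ L ≤ Λ, L.FiniteIndex ∧
      ∀ i, ∃ g, g ≠ 0 ∧ g ∈ L ∧ g ∈ H i ∧ ∀ j, g ∈ H j ∨ L ≤ H i ⊔ H j := by
  let F := {p : ι × ι // (H p.1 ⊔ H p.2).FiniteIndex}
  let S := fun p : F ↦ H p.1.1 ⊔ H p.1.2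
  have : (⨅ p, S p).FiniteIndex := AddSubgroup.finiteIndex_iInf fun p ↦ p.2
  let L := Λ ⊓ ⨅ p, S p
  refine ⟨L, inf_le_left, inferInstance, fun i ↦ ?_⟩
  obtain ⟨h, hh₀, hh⟩ := hH i
  have exists_multiple (j : {j // ¬(H i ⊔ H j).FiniteIndex}) : ∃ m : ℤ, m ≠ 0 ∧ m • h ∈ H j := by
    obtain ⟨j, hj⟩ := j
    obtain ⟨k, hk₀, hk⟩ := hH j
    exact (exists_zsmul_mem_or_finiteIndex_sup hh hk hk₀).resolve_right hj
  obtain ⟨m, hm₀, hm⟩ := exists_zsmul_mem_forall exists_multiple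
  refine ⟨L.index • m • h, ?_, L.nsmul_index_mem _, nsmul_mem (zsmul_mem hh m) _, fun j ↦ ?_⟩
  · exact smul_ne_zero AddSubgroup.FiniteIndex.index_ne_zero (smul_ne_zero hm₀ hh₀)
  · by_cases hj : (H i ⊔ H j).FiniteIndex
    · exact .inr (inf_le_right.trans (iInf_le S ⟨(i, j), hj⟩))
    · exact .inl (nsmul_mem (hm ⟨j, hj⟩) _)

end Periods

section Stabilizer

variable {G X : Type*} [AddGroup G] [AddAction G X] [MeasurableSpace X] {μ : Measure X}
  [VAddInvariantMeasure G X μ] {g : G}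

lemma aedisjoint_vadd_set_iff {A B : Set X} :
    AEDisjoint μ (g +ᵥ A) (g +ᵥ B) ↔ AEDisjoint μ A B := by
  rw [AEDisjoint, ← vadd_set_inter, measure_vadd, AEDisjoint]

lemma mem_aestabilizer_inter_of_mem_or_aedisjoint {D A : Set X} (hD : g ∈ aestabilizer G μ D)
    (hA : g ∈ aestabilizer G μ A ∨ AEDisjoint μ D A) : g ∈ aestabilizer G μ (D ∩ A) := by
  obtain hA | hDA := hA
  · rw [mem_aestabilizer, vadd_set_inter]
    exact Filter.EventuallyEq.inter hD hA
  · rw [aestabilizer_congr (ae_eq_empty.2 hDA), aestabilizer_empty]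
    exact AddSubgroup.mem_top g

lemma mem_aestabilizer_inter_sdiff_iUnion {ι : Type*} [Countable ι] {D E : Set X} {b : ι → Set X}
    (hD : g ∈ aestabilizer G μ D) (hE : g ∈ aestabilizer G μ E)
    (hb : ∀ i, g ∈ aestabilizer G μ (b i) ∨ AEDisjoint μ D (b i)) :
    g ∈ aestabilizer G μ (D ∩ (E \ ⋃ i, b i)) := by
  rw [mem_aestabilizer, inter_sdiff_distrib_left, inter_iUnion, vadd_set_sdiff, vadd_set_iUnion]
  exact Filter.EventuallyEq.diff (mem_aestabilizer_inter_of_mem_or_aedisjoint hD (.inl hE))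
    (Filter.EventuallyEq.countable_iUnion fun i ↦
      mem_aestabilizer_inter_of_mem_or_aedisjoint hD (hb i))

end Stabilizer

section Saturation

variable {G X ι : Type*} [AddCommGroup G] [AddAction G X] {L : AddSubgroup G} {g : G}

/-- The set of indices `i` such that `x` lies in the `L`-saturation `L +ᵥ b i` of `b i`. Its fibers
are the cells of the partition generated by these saturations. -/
def saturationIndices (L : AddSubgroup G) (b : ι → Set X) (x : X) : Set ι :=
  {i | x ∈ (L : Set G) +ᵥ b i}

lemma subset_saturation (L : AddSubgroup G) (A : Set X) : A ⊆ (L : Set G) +ᵥ A :=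
  fun x hx ↦ ⟨0, L.zero_mem, x, hx, zero_vadd G x⟩

lemma vadd_preimage_saturationIndices (hg : g ∈ L) (b : ι → Set X) (S : Set (Set ι)) :
    g +ᵥ saturationIndices L b ⁻¹' S = saturationIndices L b ⁻¹' S := by
  have invariant (x : X) : saturationIndices L b (-g +ᵥ x) = saturationIndices L b x := by
    ext i
    change -g +ᵥ x ∈ (L : Set G) +ᵥ b i ↔ x ∈ (L : Set G) +ᵥ b i
    rw [← mem_vadd_set_iff_neg_vadd_mem, ← vadd_assoc, vadd_coe_set hg]
  ext x
  rw [mem_vadd_set_iff_neg_vadd_mem, mem_preimage, mem_preimage, invariant]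

lemma disjoint_preimage_saturationIndices {b : ι → Set X} {J : Set ι} {i : ι} (hi : i ∉ J) :
    Disjoint (saturationIndices L b ⁻¹' {J}) (b i) := by
  refine disjoint_left.2 fun x hxJ hxi ↦ hi ?_
  rw [← mem_singleton_iff.1 hxJ]
  exact subset_saturation L (b i) hxi

variable [MeasurableSpace X]

lemma measurable_saturationIndices [MeasurableConstVAdd G X] [Countable L] {b : ι → Set X}
    (hb : ∀ i, MeasurableSet (b i)) : Measurable (saturationIndices L b) := by
  refine measurable_set_iff.2 fun i ↦ measurableSet_setOfPred.1 ?_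
  change MeasurableSet ((L : Set G) +ᵥ b i)
  rw [← iUnion_vadd_set]
  exact .biUnion (to_countable _) fun v _ ↦ (hb i).const_vadd v

variable {μ : Measure X} [VAddInvariantMeasure G X μ]

lemma aedisjoint_saturation [Countable L] {A B : Set X} (hAB : AEDisjoint μ A B)
    (hL : L ≤ aestabilizer G μ A ⊔ aestabilizer G μ B) :
    AEDisjoint μ ((L : Set G) +ᵥ A) ((L : Set G) +ᵥ B) := by
  have translates (v w : L) : AEDisjoint μ ((v : G) +ᵥ A) ((w : G) +ᵥ B) := by
    obtain ⟨p, hp, q, hq, hpq⟩ := AddSubgroup.mem_sup.1 (hL (sub_mem w.2 v.2))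
    have hw : (w : G) = v + p + q := by rw [add_assoc, hpq, add_sub_cancel]
    have hA : (v + p) +ᵥ A =ᵐ[μ] (v : G) +ᵥ A := by
      rw [add_vadd]
      exact (vadd_set_ae_eq (v : G)).2 hp
    have hB : (w : G) +ᵥ B =ᵐ[μ] (v + p) +ᵥ B := by
      rw [hw, add_vadd _ q]
      exact (vadd_set_ae_eq (v + p)).2 hq
    exact (aedisjoint_vadd_set_iff.2 hAB).congr hA.symm hB
  simp only [← iUnion_vadd_set, biUnion_eq_iUnion, AEDisjoint.iUnion_left_iff,
    AEDisjoint.iUnion_right_iff]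
  exact fun w v ↦ translates v w

lemma mem_aestabilizer_preimage_saturationIndices_inter_sdiff [Countable ι] {E : Set X}
    {b : ι → Set X} {S : Set (Set ι)} (hg : g ∈ L) (hE : g ∈ aestabilizer G μ E)
    (hb : ∀ i, g ∈ aestabilizer G μ (b i) ∨ AEDisjoint μ (saturationIndices L b ⁻¹' S) (b i)) :
    g ∈ aestabilizer G μ (saturationIndices L b ⁻¹' S ∩ (E \ ⋃ i, b i)) :=
  mem_aestabilizer_inter_sdiff_iUnion
    (stabilizer_le_aestabilizer _ (vadd_preimage_saturationIndices hg b S)) hE hb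

lemma mem_or_aedisjoint_preimage_saturationIndices [Countable L] {b : ι → Set X}
    (hb : Pairwise (AEDisjoint μ on b)) {J : Set ι} {i j : ι} (hiJ : i ∈ J)
    (hi : g ∈ aestabilizer G μ (b i)) (hj : g ∈ aestabilizer G μ (b j) ∨
      L ≤ aestabilizer G μ (b i) ⊔ aestabilizer G μ (b j)) :
    g ∈ aestabilizer G μ (b j) ∨ AEDisjoint μ (saturationIndices L b ⁻¹' {J}) (b j) := by
  obtain rfl | hij := eq_or_ne i j
  · exact .inl hi
  refine hj.imp_right fun hL ↦ (aedisjoint_saturation (hb hij) hL).mono ?_ (subset_saturation L _)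
  rintro x rfl
  exact hiJ

end Saturation

lemma isWeaklyPeriodic_of_preimage_singleton_inter {X κ : Type*} [MeasurableSpace X] {μ : Measure X}
    {T : ℤ × ℤ → X → X} {C : Set X} [Finite κ] [MeasurableSpace κ] [MeasurableSingletonClass κ]
    {f : X → κ} (hf : Measurable f) (hC : MeasurableSet C)
    (h : ∀ k, IsOnePeriodic μ T (f ⁻¹' {k} ∩ C)) : IsWeaklyPeriodic μ T C := by
  obtain ⟨n, ⟨e⟩⟩ := Finite.exists_equiv_fin κ
  refine ⟨n, fun i ↦ f ⁻¹' {e.symm i} ∩ C, fun i ↦ (hf (measurableSet_singleton _)).inter hC,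
    fun i j hij ↦ ?_, ?_, fun i ↦ h _⟩
  · exact (pairwise_disjoint_fiber f (e.symm.injective.ne hij)).mono inter_subset_left
      inter_subset_left
  · rw [← iUnion_inter, ← preimage_iUnion, e.symm.surjective.iUnion_comp (fun k ↦ {k}),
      iUnion_of_singleton, preimage_univ, univ_inter]

theorem sdiff_weaklyPeriodic_general {X : Type*} [MeasurableSpace X] (μ : Measure X)
    (T : ℤ × ℤ → X → X) (hmp : ∀ g, MeasurePreserving (T g) μ μ) (hT0 : T 0 = id)
    (hTadd : ∀ g h : ℤ × ℤ, T (g + h) = T g ∘ T h) (E B : Set X) (hE : MeasurableSet E)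
    (hEper : IsPeriodic μ T E) (hBweak : IsWeaklyPeriodic μ T B) :
    IsWeaklyPeriodic μ T (E \ B) := by
  let : AddAction (ℤ × ℤ) X :=
    { vadd := T, zero_vadd := congrFun hT0, add_vadd := fun g h ↦ congrFun (hTadd g h) }
  have : MeasurableConstVAdd (ℤ × ℤ) X := ⟨fun g ↦ (hmp g).measurable⟩
  have : VAddInvariantMeasure (ℤ × ℤ) X μ :=
    ⟨fun g _ hs ↦ (hmp g).measure_preimage hs.nullMeasurableSet⟩
  obtain ⟨Λ, _, hΛ⟩ := hEper
  obtain ⟨n, b, hbm, hbd, rfl, hb⟩ := hBweak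
  obtain ⟨L, hLΛ, _, hL⟩ := exists_finiteIndex_le_and_forall_exists_mem
    (H := fun i ↦ aestabilizer (ℤ × ℤ) μ (b i)) Λ hb
  refine isWeaklyPeriodic_of_preimage_singleton_inter (measurable_saturationIndices (L := L) hbm)
    (hE.diff (.iUnion hbm)) fun J ↦ ?_
  obtain rfl | ⟨i, hi⟩ := J.eq_empty_or_nonempty
  · obtain ⟨g, hg, hg₀⟩ := exists_mem_ne_zero_of_finiteIndex L
    exact ⟨g, hg₀, mem_aestabilizer_preimage_saturationIndices_inter_sdiff hg (hΛ g (hLΛ hg))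
      fun j ↦ .inr (disjoint_preimage_saturationIndices (notMem_empty j)).aedisjoint⟩
  · obtain ⟨g, hg₀, hg, hgi, hgj⟩ := hL i
    exact ⟨g, hg₀, mem_aestabilizer_preimage_saturationIndices_inter_sdiff hg (hΛ g (hLΛ hg))
      fun j ↦ mem_or_aedisjoint_preimage_saturationIndices
        (fun i j hij ↦ (hbd i j hij).aedisjoint) hi hgi (hgj j)⟩

/-- **Lemma 5.1.** Let `(X, μ)` be a probability space with an ergodic
measure-preserving `ℤ²`-action. If `E ⊆ X` is periodic and `B ⊆ E` is weakly
periodic, then `E ∖ B` is weakly periodic. -/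
theorem sdiff_weaklyPeriodic
    {X : Type*} [MeasurableSpace X] (μ : Measure X) [IsProbabilityMeasure μ]
    (T : ℤ × ℤ → X → X)
    (hmp : ∀ g, MeasurePreserving (T g) μ μ)
    (hT0 : T 0 = id)
    (hTadd : ∀ g h : ℤ × ℤ, T (g + h) = T g ∘ T h)
    (herg : ∀ S : Set X, MeasurableSet S → (∀ g : ℤ × ℤ, T g ⁻¹' S =ᵐ[μ] S) →
      μ S = 0 ∨ μ S = 1)
    (E B : Set X) (hE : MeasurableSet E) (hBE : B ⊆ E)
    (hEper : IsPeriodic μ T E)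
    (hBweak : IsWeaklyPeriodic μ T B) :
    IsWeaklyPeriodic μ T (E \ B) :=
  sdiff_weaklyPeriodic_general μ T hmp hT0 hTadd E B hE hEper hBweak
end
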